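/- arXiv:1205.5847 — 5 statements merged into one kernel-verified Lean document; each statement's English description precedes it below -/
import Mathlib

section
/- Let λ be a colored ℓ-multi-partition with coloring p : {1,…,ℓ} → ℤ/n and let ξ be a slope datum. If there exist ī ∈ ℤ/n, a removable ī-node r of λ and an addable ī-node a of λ such that h^ξ(r) + ξ_Ω + ξ_Ω̄ > h^ξ(a) > h^ξ(r), then λ admits a ξ-illegal triple; equivalently, λ is not ξ-regular. (Lemma 7.1 of the paper.) -/
/-!
Write `r = (k; i_r, j_r)` and `a = (m; i_a, j_a)`. Since `r` is removable, row `i_r` of `λ(k)` ends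
at `j_r` and column `j_r` ends at `i_r`; since `a` is addable, row `i_a` of `λ(m)` ends at `j_a - 1`
and column `j_a` ends at `i_a - 1`. The illegal triple is read off from these four facts.

* If `j_a ≤ j_r`, take `b = (i_r, j_a)`, `s = k`, `t = m`. The quantity in condition (3) is then
  `h(a) - h(r) - ξ_Ω`.
* If `j_r < j_a`, take `b = (i_a, j_r)`, `s = m`, `t = k`. The quantity in condition (3) is then
  `h(r) - h(a) + ξ_Ω̄`.

In both cases the bounds `0 < h(a) - h(r) < ξ_Ω + ξ_Ω̄` are exactly condition (3), and condition (2)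
says that `r` and `a` have the same color.
-/

open scoped Classical

/-- A partition: `part m` is the `(m+1)`-st part, i.e. `λ_{m+1}`. -/
structure Ptn where
  part : ℕ → ℕ
  antitone' : ∀ i j : ℕ, i ≤ j → part j ≤ part i
  finite' : ∃ N : ℕ, ∀ i ≥ N, part i = 0

namespace Ptn

/-- `λ_i`, for `i ≥ 1`. -/
def row (q : Ptn) (i : ℕ) : ℕ := q.part (i - 1)

/-- Membership of the box `(i,j)` (boxes have `i, j ≥ 1`). -/
def mem (q : Ptn) (i j : ℕ) : Prop := 1 ≤ i ∧ 1 ≤ j ∧ j ≤ q.row i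

/-- The dual partition `λ'_j = #{i ≥ 1 : λ_i ≥ j}`. -/
noncomputable def dual (q : Ptn) (j : ℕ) : ℕ := Nat.card {i : ℕ // 1 ≤ i ∧ j ≤ q.row i}

/-- `arm_λ(i,j) = λ_i - j`. -/
def arm (q : Ptn) (i j : ℕ) : ℤ := (q.row i : ℤ) - (j : ℤ)

/-- `leg_λ(i,j) = λ'_j - i`. -/
noncomputable def leg (q : Ptn) (i j : ℕ) : ℤ := (q.dual j : ℤ) - (i : ℤ)

/-- `(i,j)` is an addable node of `q`. -/
def Addable (q : Ptn) (i j : ℕ) : Prop :=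
  1 ≤ i ∧ 1 ≤ j ∧ q.row i = j - 1 ∧ (i = 1 ∨ j ≤ q.row (i - 1))

/-- `(i,j)` is a removable node of `q`. -/
def Removable (q : Ptn) (i j : ℕ) : Prop :=
  1 ≤ i ∧ 1 ≤ j ∧ q.row i = j ∧ q.row (i + 1) < j

/-- The partition obtained by adding the box `(i,j)` (when `(i,j)` is addable). -/
noncomputable def addBox (q : Ptn) (i j : ℕ) : Ptn :=
  if h : ∃ q' : Ptn, ∀ m : ℕ, q'.part m = if m = i - 1 then j else q.part m then
    h.choose else q

/-- The partition obtained by removing the box `(i,j)` (when `(i,j)` is removable). -/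
noncomputable def removeBox (q : Ptn) (i j : ℕ) : Ptn :=
  if h : ∃ q' : Ptn, ∀ m : ℕ, q'.part m = if m = i - 1 then j - 1 else q.part m then
    h.choose else q

/-- The empty partition. -/
def empty : Ptn := ⟨fun _ => 0, fun _ _ _ => le_rfl, ⟨0, fun _ _ => rfl⟩⟩

end Ptn
/-- Nodes (triples) `(k; i, j)`. -/
abbrev Node (l : ℕ) := Fin l × ℕ × ℕ

/-- Multi-partitions with `l` components. -/
abbrev MP (l : ℕ) := Fin l → Ptn

/-- The color `p(k) - i + j` of the triple `(k;i,j)`. -/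
def colorOf (n l : ℕ) (p : Fin l → ZMod n) (x : Node l) : ZMod n :=
  p x.1 - (x.2.1 : ZMod n) + (x.2.2 : ZMod n)

/-- `(k;i,j)` is a box of the multi-partition `lam`. -/
def IsBox (l : ℕ) (lam : MP l) (x : Node l) : Prop := (lam x.1).mem x.2.1 x.2.2

/-- `(k;i,j)` is an addable `ib`-node of `lam`. -/
def IsAdd (n l : ℕ) (lam : MP l) (p : Fin l → ZMod n) (ib : ZMod n) (x : Node l) : Prop :=
  (lam x.1).Addable x.2.1 x.2.2 ∧ colorOf n l p x = ib

/-- `(k;i,j)` is a removable `ib`-node of `lam`. -/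
def IsRem (n l : ℕ) (lam : MP l) (p : Fin l → ZMod n) (ib : ZMod n) (x : Node l) : Prop :=
  (lam x.1).Removable x.2.1 x.2.2 ∧ colorOf n l p x = ib

/-- Add the box `x` to the multi-partition `lam`. -/
noncomputable def MPadd {l : ℕ} (lam : MP l) (x : Node l) : MP l :=
  Function.update lam x.1 ((lam x.1).addBox x.2.1 x.2.2)

/-- Remove the box `x` from the multi-partition `lam`. -/
noncomputable def MPremove {l : ℕ} (lam : MP l) (x : Node l) : MP l :=
  Function.update lam x.1 ((lam x.1).removeBox x.2.1 x.2.2)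

/-- The empty multi-partition. -/
def MPempty (l : ℕ) : MP l := fun _ => Ptn.empty

/-- A slope datum `(ξ_Ω, ξ_Ω̄, ξ_1, …, ξ_l)` of positive reals. -/
structure Slope (l : ℕ) where
  xiO : ℝ
  xiObar : ℝ
  xi : Fin l → ℝ
  xiO_pos : 0 < xiO
  xiObar_pos : 0 < xiObar
  xi_pos : ∀ k, 0 < xi k

namespace Slope

/-- The height `h^ξ(k;i,j) = ξ_k + ξ_Ω i + ξ_Ω̄ j`. -/
def h {l : ℕ} (ξ : Slope l) (x : Node l) : ℝ :=
  ξ.xi x.1 + ξ.xiO * (x.2.1 : ℝ) + ξ.xiObar * (x.2.2 : ℝ)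

/-- `ξ` is general: distinct triples have distinct heights. -/
def General {l : ℕ} (ξ : Slope l) : Prop :=
  ∀ x y : Node l, 1 ≤ x.2.1 → 1 ≤ x.2.2 → 1 ≤ y.2.1 → 1 ≤ y.2.2 → ξ.h x = ξ.h y → x = y

/-- `ξ` is aligned: `|ξ_s - ξ_t| < ξ_Ω + ξ_Ω̄` for all `s, t`. -/
def Aligned {l : ℕ} (ξ : Slope l) : Prop :=
  ∀ s t : Fin l, |ξ.xi s - ξ.xi t| < ξ.xiO + ξ.xiObar

/-- `ξ` is integral: all entries are (positive) integers. -/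
def Integral {l : ℕ} (ξ : Slope l) : Prop :=
  (∃ m : ℤ, ξ.xiO = (m : ℝ)) ∧ (∃ m : ℤ, ξ.xiObar = (m : ℝ)) ∧ ∀ k, ∃ m : ℤ, ξ.xi k = (m : ℝ)

end Slope
/-- The triple `((i,j), s, t)` is `ξ`-illegal for `lam`. -/
def Illegal (n l : ℕ) (lam : MP l) (p : Fin l → ZMod n) (ξ : Slope l)
    (i j : ℕ) (s t : Fin l) : Prop :=
  (lam s).mem i j ∧
  (p s - p t + (((lam s).arm i j + (lam t).leg i j + 1 : ℤ) : ZMod n) = 0) ∧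
  (-ξ.xiO < ξ.xi t - ξ.xi s + ξ.xiO * (((lam t).leg i j : ℤ) : ℝ)
      - ξ.xiObar * (((lam s).arm i j : ℤ) : ℝ)) ∧
  (ξ.xi t - ξ.xi s + ξ.xiO * (((lam t).leg i j : ℤ) : ℝ)
      - ξ.xiObar * (((lam s).arm i j : ℤ) : ℝ) < ξ.xiObar)

/-- `lam` is `ξ`-regular: no triple is `ξ`-illegal for `lam`. -/
def Regular (n l : ℕ) (lam : MP l) (p : Fin l → ZMod n) (ξ : Slope l) : Prop :=
  ∀ (i j : ℕ) (s t : Fin l), ¬ Illegal n l lam p ξ i j s t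
namespace Ptn

lemma row_anti (q : Ptn) {i j : ℕ} (h : i ≤ j) : q.row j ≤ q.row i :=
  q.antitone' _ _ (Nat.sub_le_sub_right h 1)

lemma dual_eq (q : Ptn) {j m : ℕ} (h : ∀ i, 1 ≤ i → (j ≤ q.row i ↔ i ≤ m)) : q.dual j = m := by
  have hset : ∀ i, (1 ≤ i ∧ j ≤ q.row i) ↔ i ∈ Finset.Icc 1 m := by
    intro i
    rw [Finset.mem_Icc]
    exact and_congr_right (h i)
  unfold dual
  rw [Nat.card_congr (Equiv.subtypeEquivRight hset), Nat.card_eq_fintype_card, Fintype.card_coe]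
  simp

lemma Removable.dual_eq {q : Ptn} {i j : ℕ} (h : q.Removable i j) : q.dual j = i := by
  obtain ⟨-, -, hrow, hnext⟩ := h
  refine q.dual_eq fun m _ => ⟨fun hm => ?_, fun hm => ?_⟩
  · by_contra hlt
    have := q.row_anti (show i + 1 ≤ m by omega)
    omega
  · have := q.row_anti hm
    omega

lemma Addable.dual_eq {q : Ptn} {i j : ℕ} (h : q.Addable i j) : q.dual j = i - 1 := by
  obtain ⟨hi, hj, hrow, hprev⟩ := h
  refine q.dual_eq fun m hm1 => ⟨fun hm => ?_, fun hm => ?_⟩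
  · by_contra hlt
    have := q.row_anti (show i ≤ m by omega)
    omega
  · have := q.row_anti hm
    omega

end Ptn

/-- The case `j_a ≤ j_r`: the box in the row of `r` and the column of `a` is illegal. -/
lemma illegal_of_col_le {n l : ℕ} {lam : MP l} {p : Fin l → ZMod n} {ξ : Slope l} {ib : ZMod n}
    {r a : Node l} (hr : IsRem n l lam p ib r) (ha : IsAdd n l lam p ib a)
    (h1 : ξ.h r + ξ.xiO + ξ.xiObar > ξ.h a) (h2 : ξ.h a > ξ.h r) (hle : a.2.2 ≤ r.2.2) :
    Illegal n l lam p ξ r.2.1 a.2.2 r.1 a.1 := by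
  obtain ⟨hr, hrc⟩ := hr
  obtain ⟨ha, hac⟩ := ha
  have hrow := hr.2.2.1
  have harm : (lam r.1).arm r.2.1 a.2.2 = (r.2.2 : ℤ) - a.2.2 := by
    rw [Ptn.arm, hrow]
  have hleg : (lam a.1).leg r.2.1 a.2.2 = (a.2.1 : ℤ) - 1 - r.2.1 := by
    rw [Ptn.leg, ha.dual_eq, Nat.cast_sub ha.1, Nat.cast_one]
  simp only [colorOf] at hrc hac
  simp only [Slope.h] at h1 h2
  refine ⟨⟨hr.1, ha.2.1, hrow ▸ hle⟩, ?_, ?_, ?_⟩ <;> rw [harm, hleg] <;> push_cast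
  · linear_combination hrc - hac
  · linarith
  · linarith

/-- The case `j_r < j_a`: the box in the row of `a` and the column of `r` is illegal. -/
lemma illegal_of_col_lt {n l : ℕ} {lam : MP l} {p : Fin l → ZMod n} {ξ : Slope l} {ib : ZMod n}
    {r a : Node l} (hr : IsRem n l lam p ib r) (ha : IsAdd n l lam p ib a)
    (h1 : ξ.h r + ξ.xiO + ξ.xiObar > ξ.h a) (h2 : ξ.h a > ξ.h r) (hlt : r.2.2 < a.2.2) :
    Illegal n l lam p ξ a.2.1 r.2.2 a.1 r.1 := by
  obtain ⟨hr, hrc⟩ := hr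
  obtain ⟨ha, hac⟩ := ha
  have hrow := ha.2.2.1
  have harm : (lam a.1).arm a.2.1 r.2.2 = (a.2.2 : ℤ) - 1 - r.2.2 := by
    rw [Ptn.arm, hrow, Nat.cast_sub ha.2.1, Nat.cast_one]
  have hleg : (lam r.1).leg a.2.1 r.2.2 = (r.2.1 : ℤ) - a.2.1 := by
    rw [Ptn.leg, hr.dual_eq]
  simp only [colorOf] at hrc hac
  simp only [Slope.h] at h1 h2
  refine ⟨⟨ha.1, hr.2.1, by omega⟩, ?_, ?_, ?_⟩ <;> rw [harm, hleg] <;> push_cast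
  · linear_combination hac - hrc
  · linarith
  · linarith

/-- Lemma 7.1: if `lam` has a removable `ib`-node `r` and an addable `ib`-node `a`
with `h(r) + ξ_Ω + ξ_Ω̄ > h(a) > h(r)`, then `lam` admits a `ξ`-illegal triple, i.e. `lam` is
not `ξ`-regular. -/
theorem stmt0 (n l : ℕ) (hn : 1 ≤ n) (hl : 1 ≤ l) (lam : MP l) (p : Fin l → ZMod n)
    (ξ : Slope l) (ib : ZMod n) (r a : Node l)
    (hr : IsRem n l lam p ib r) (ha : IsAdd n l lam p ib a)
    (h1 : ξ.h r + ξ.xiO + ξ.xiObar > ξ.h a) (h2 : ξ.h a > ξ.h r) :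
    (∃ (i j : ℕ) (s t : Fin l), Illegal n l lam p ξ i j s t) ∧
      ¬ Regular n l lam p ξ := by
  have hex : ∃ (i j : ℕ) (s t : Fin l), Illegal n l lam p ξ i j s t := by
    rcases le_or_gt a.2.2 r.2.2 with h | h
    · exact ⟨_, _, _, _, illegal_of_col_le hr ha h1 h2 h⟩
    · exact ⟨_, _, _, _, illegal_of_col_lt hr ha h1 h2 h⟩
  refine ⟨hex, fun hreg => ?_⟩
  obtain ⟨i, j, s, t, h⟩ := hex
  exact hreg i j s t h
end

section
/- Let λ be a colored ℓ-multi-partition with coloring p : {1,…,ℓ} → ℤ/n, let ξ be a slope datum, let r = (k;i,j) be a removable ī-node of λ and a = (k′;i′,j′) an addable ī-node of λ with h^ξ(r) + ξ_Ω + ξ_Ω̄ > h^ξ(a) > h^ξ(r). If j < j′, then (i′,j) ∈ λ(k′) and the triple ((i′,j), k′, k) is ξ-illegal for λ. -/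
/-!
Since `r = (k;i,j)` is removable, column `j` of `lam k` ends exactly in row `i`, so its dual part
is `i` and `leg (i',j) = i - i'`. Since `a = (k';i',j')` is addable, row `i'` of `lam k'` has
length `j' - 1`, so `arm (i',j) = j' - 1 - j`, and `j < j'` puts `(i',j)` in the diagram.
With these values the divisibility condition says that `r` and `a` have the same color, and the
quantity bounded in the slope condition is `h(r) - h(a) + ξ_Ω̄`, so that the two bounds are the two
assumed height inequalities.
-/

open scoped Classical

/-- The column through a removable box ends at that box. -/
theorem Ptn.dual_of_removable (q : Ptn) (i j : ℕ) (h : q.Removable i j) : q.dual j = i := by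
  obtain ⟨hi, -, h3, h4⟩ := h
  have key : ∀ m : ℕ, (1 ≤ m ∧ j ≤ q.row m) ↔ m ∈ Finset.Icc 1 i := by
    intro m
    rw [Finset.mem_Icc]
    refine and_congr_right fun hm => ⟨fun hjm => ?_, fun hmi => ?_⟩
    · by_contra hlt
      have : q.row m ≤ q.row (i + 1) := q.antitone' _ _ (by omega)
      omega
    · have : q.row i ≤ q.row m := q.antitone' _ _ (by omega)
      omega
  unfold Ptn.dual
  rw [Nat.card_congr (Equiv.subtypeEquivRight key), Nat.card_eq_fintype_card, Fintype.card_coe,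
    Nat.card_Icc, Nat.add_sub_cancel]

/-- with `r = (k;i,j)` removable and `a = (k';i',j')` addable (both `ib`-nodes)
satisfying `h(r) + ξ_Ω + ξ_Ω̄ > h(a) > h(r)`, if `j < j'` then `(i',j) ∈ lam(k')` and the
triple `((i',j), k', k)` is `ξ`-illegal for `lam`. -/
theorem stmt1 (n l : ℕ) (hn : 1 ≤ n) (hl : 1 ≤ l) (lam : MP l) (p : Fin l → ZMod n)
    (ξ : Slope l) (ib : ZMod n) (k k' : Fin l) (i j i' j' : ℕ)
    (hr : IsRem n l lam p ib (k, i, j)) (ha : IsAdd n l lam p ib (k', i', j'))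
    (h1 : ξ.h (k, i, j) + ξ.xiO + ξ.xiObar > ξ.h (k', i', j'))
    (h2 : ξ.h (k', i', j') > ξ.h (k, i, j)) (hj : j < j') :
    (lam k').mem i' j ∧ Illegal n l lam p ξ i' j k' k := by
  obtain ⟨hrem, hrc⟩ := hr
  obtain ⟨⟨hi', hj', hrow, -⟩, hac⟩ := ha
  have hd : (lam k).dual j = i := Ptn.dual_of_removable _ _ _ hrem
  have hj1 : 1 ≤ j := hrem.2.1
  dsimp only at hi' hj' hrow
  have hmem : (lam k').mem i' j := ⟨hi', hj1, by omega⟩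
  have harm : (lam k').arm i' j = (j' : ℤ) - 1 - j := by
    unfold Ptn.arm
    omega
  have hleg : (lam k).leg i' j = (i : ℤ) - i' := by
    rw [Ptn.leg, hd]
  simp only [colorOf] at hrc hac
  simp only [Slope.h] at h1 h2
  refine ⟨hmem, hmem, ?_, ?_, ?_⟩
  · rw [harm, hleg]
    push_cast
    linear_combination hac - hrc
  · rw [harm, hleg]
    push_cast
    linarith
  · rw [harm, hleg]
    push_cast
    linarith
end

section
/- Let λ be a colored ℓ-multi-partition with coloring p : {1,…,ℓ} → ℤ/n, let ξ be a slope datum, let r = (k;i,j) be a removable ī-node of λ and a = (k′;i′,j′) an addable ī-node of λ with h^ξ(r) + ξ_Ω + ξ_Ω̄ > h^ξ(a) > h^ξ(r). If j ≥ j′, then (i,j′) ∈ λ(k) and the triple ((i,j′), k, k′) is ξ-illegal for λ. -/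
/-!
Since `(i',j')` is addable to `λ(k')`, the column `j'` of `λ(k')` has length exactly `i' - 1`
(`Ptn.Addable.dual_eq`), so the leg of `(i,j')` with respect to `λ(k')` is `i' - i - 1`. Since
`(i,j)` is removable from `λ(k)`, the row `i` ends at `j`, so the arm of `(i,j')` with respect to
`λ(k)` is `j - j'`. With these values the congruence says that the two nodes have the same color,
and the quantity bounded in the definition of an illegal triple is `h(a) - h(r) - ξ_Ω`.
-/

open scoped Classical

theorem Ptn.row_antitone (q : Ptn) {a b : ℕ} (hab : a ≤ b) : q.row b ≤ q.row a :=
  q.antitone' _ _ (Nat.sub_le_sub_right hab 1)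

/-- The rows of length at least `j` are precisely the rows `1, …, i - 1`. -/
theorem Ptn.Addable.dual_eq_s2 {q : Ptn} {i j : ℕ} (h : q.Addable i j) : q.dual j = i - 1 := by
  obtain ⟨hi, hj, hrow, hup⟩ := h
  have hmem : ∀ m : ℕ, (1 ≤ m ∧ j ≤ q.row m) ↔ m ∈ Finset.Ico 1 i := by
    intro m
    rw [Finset.mem_Ico]
    refine and_congr_right fun hm => ⟨fun hjm => ?_, fun hmi => ?_⟩
    · by_contra! him
      have := q.row_antitone him
      omega
    · rcases hup with h1 | h1
      · omega
      · exact h1.trans (q.row_antitone (by omega))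
  unfold Ptn.dual
  rw [Nat.card_congr (Equiv.subtypeEquivRight hmem), Nat.card_eq_fintype_card, Fintype.card_coe,
    Nat.card_Ico]

/-- with `r = (k;i,j)` removable and `a = (k';i',j')` addable (both `ib`-nodes)
satisfying `h(r) + ξ_Ω + ξ_Ω̄ > h(a) > h(r)`, if `j ≥ j'` then `(i,j') ∈ lam(k)` and the
triple `((i,j'), k, k')` is `ξ`-illegal for `lam`. -/
theorem stmt2 (n l : ℕ) (hn : 1 ≤ n) (hl : 1 ≤ l) (lam : MP l) (p : Fin l → ZMod n)
    (ξ : Slope l) (ib : ZMod n) (k k' : Fin l) (i j i' j' : ℕ)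
    (hr : IsRem n l lam p ib (k, i, j)) (ha : IsAdd n l lam p ib (k', i', j'))
    (h1 : ξ.h (k, i, j) + ξ.xiO + ξ.xiObar > ξ.h (k', i', j'))
    (h2 : ξ.h (k', i', j') > ξ.h (k, i, j)) (hj : j' ≤ j) :
    (lam k).mem i j' ∧ Illegal n l lam p ξ i j' k k' := by
  obtain ⟨⟨hi, -, hrow, -⟩, hrc⟩ := hr
  obtain ⟨hadd, hac⟩ := ha
  have hdual := hadd.dual_eq_s2
  obtain ⟨hi', hj', -, -⟩ := hadd
  simp only at hrow hdual hi hi' hj'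
  have hmem : (lam k).mem i j' := ⟨hi, hj', by omega⟩
  have harm : (lam k).arm i j' = (j : ℤ) - j' := by
    rw [Ptn.arm, hrow]
  have hleg : (lam k').leg i j' = (i' : ℤ) - 1 - i := by
    rw [Ptn.leg, hdual, Nat.cast_sub hi', Nat.cast_one]
  simp only [Slope.h] at h1 h2
  refine ⟨hmem, hmem, ?_, ?_, ?_⟩
  · have hc := hrc.trans hac.symm
    simp only [colorOf] at hc
    rw [harm, hleg]
    push_cast
    linear_combination hc
  · rw [harm, hleg]
    push_cast
    linarith
  · rw [harm, hleg]
    push_cast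
    linarith
end

section
/- Let ξ be an integral slope datum, let λ be a colored ℓ-multi-partition, let b be an addable node of λ of color ī, and let μ be the colored ℓ-multi-partition obtained from λ by adding the box b. Then Ψ(μ) = A_{ī, h^ξ(b)}^{−1} · Ψ(λ) in ℳ. (Lemma 8.2 of the paper.) -/
/-!
Write `f k i j = Y_{c̄(k;i,j), h(k;i,j)}`. A removable node `(k;i,j)` contributes the inverse of
`f k (i+1) (j+1)`, because the shift by `(1,1)` preserves the color and raises the height by `K`.
There is a node to add in row `i+1` exactly when there is one to remove in row `i`, namely when
`λ_{i+1} < λ_i`; and when `λ_{i+1} = λ_i` the two would-be contributions `f k (i+1) (λ_{i+1}+1)` and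
`f k (i+1) (λ_i+1)⁻¹` cancel. Hence the conditions may be dropped altogether (`sum_rows`), and `Ψ(λ)`
is, up to a factor independent of `λ`, the product over all rows of
`f k i (λ_i+1) · f k (i+1) (λ_i+1)⁻¹` (`Psi_eq`). Adding a box in row `i`
changes only the factor of that row, and the quotient is `A⁻¹`.
-/

open scoped Classical

/-- An integral slope datum: positive integer entries. -/
structure ZSlope (l : ℕ) where
  xiO : ℤ
  xiObar : ℤ
  xi : Fin l → ℤ
  xiO_pos : 0 < xiO
  xiObar_pos : 0 < xiObar
  xi_pos : ∀ k, 0 < xi k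

namespace ZSlope

/-- The real slope datum underlying an integral slope datum. -/
noncomputable def toSlope {l : ℕ} (ξ : ZSlope l) : Slope l where
  xiO := (ξ.xiO : ℝ)
  xiObar := (ξ.xiObar : ℝ)
  xi := fun k => (ξ.xi k : ℝ)
  xiO_pos := by exact_mod_cast ξ.xiO_pos
  xiObar_pos := by exact_mod_cast ξ.xiObar_pos
  xi_pos := fun k => by have := ξ.xi_pos k; positivity

/-- The (integer-valued) height `h^ξ(k;i,j) = ξ_k + ξ_Ω i + ξ_Ω̄ j`. -/
def h {l : ℕ} (ξ : ZSlope l) (x : Node l) : ℤ :=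
  ξ.xi x.1 + ξ.xiO * (x.2.1 : ℤ) + ξ.xiObar * (x.2.2 : ℤ)

/-- `ξ` is aligned: `|ξ_s - ξ_t| < ξ_Ω + ξ_Ω̄` for all `s, t`. -/
def Aligned {l : ℕ} (ξ : ZSlope l) : Prop :=
  ∀ s t : Fin l, |ξ.xi s - ξ.xi t| < ξ.xiO + ξ.xiObar

end ZSlope

/-- The group `ℳ` of Laurent monomials in the variables `Y_{ib,k}`, written additively:
a monomial is the finitely supported function recording its exponents. -/
abbrev Mon (n : ℕ) := (ZMod n × ℤ) →₀ ℤ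

/-- The monomial `A_{ib,k} = Y_{ib,k} · Y_{ib,k+K} · Y_{ib+1,k+ξ_Ω̄}⁻¹ · Y_{ib-1,k+ξ_Ω}⁻¹`
(written additively), where `K = ξ_Ω + ξ_Ω̄`. -/
noncomputable def Amon (n : ℕ) (xiO xiObar : ℤ) (ib : ZMod n) (k : ℤ) : Mon n :=
  Finsupp.single (ib, k) 1 + Finsupp.single (ib, k + (xiO + xiObar)) 1
    - Finsupp.single (ib + 1, k + xiObar) 1 - Finsupp.single (ib - 1, k + xiO) 1

/-- `Ψ(lam) = Π_{a ∈ A(lam)} Y_{c̄(a), h(a)} · Π_{r ∈ R(lam)} Y_{c̄(r), h(r)+K}⁻¹`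
(written additively), where `K = ξ_Ω + ξ_Ω̄`. -/
noncomputable def Psi (n l : ℕ) (p : Fin l → ZMod n) (ξ : ZSlope l) (lam : MP l) : Mon n :=
  (∑ᶠ x : Node l, if (lam x.1).Addable x.2.1 x.2.2 then
      Finsupp.single (colorOf n l p x, ξ.h x) (1 : ℤ) else 0)
  - (∑ᶠ x : Node l, if (lam x.1).Removable x.2.1 x.2.2 then
      Finsupp.single (colorOf n l p x, ξ.h x + (ξ.xiO + ξ.xiObar)) (1 : ℤ) else 0)

namespace Ptn

/-- In row `m + 1` only the box just beyond the end of the row can be addable. -/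
lemma addable_iff (q : Ptn) (i j : ℕ) :
    q.Addable i j ↔ ∃ m, i = m + 1 ∧ j = q.part m + 1 ∧ (m = 0 ∨ q.part m < q.part (m - 1)) := by
  unfold Addable row
  constructor
  · rintro ⟨hi, hj, h, h'⟩
    obtain ⟨m, rfl⟩ : ∃ m, i = m + 1 := ⟨i - 1, by omega⟩
    simp only [Nat.add_sub_cancel] at h h'
    exact ⟨m, rfl, by omega, by omega⟩
  · rintro ⟨m, rfl, rfl, h⟩
    exact ⟨by omega, by omega, rfl, h.imp (by omega) id⟩

/-- In row `m + 1` only the last box can be removable. -/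
lemma removable_iff (q : Ptn) (i j : ℕ) :
    q.Removable i j ↔ ∃ m, i = m + 1 ∧ j = q.part m ∧ q.part (m + 1) < q.part m := by
  unfold Removable row
  constructor
  · rintro ⟨hi, hj, h, h'⟩
    obtain ⟨m, rfl⟩ : ∃ m, i = m + 1 := ⟨i - 1, by omega⟩
    simp only [Nat.add_sub_cancel] at h h'
    exact ⟨m, rfl, by omega, by omega⟩
  · rintro ⟨m, rfl, rfl, h⟩
    exact ⟨by omega, by omega, rfl, h⟩

lemma addBox_part (q : Ptn) (m : ℕ) (hm : m = 0 ∨ q.part m < q.part (m - 1)) (t : ℕ) :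
    (q.addBox (m + 1) (q.part m + 1)).part t = if t = m then q.part m + 1 else q.part t := by
  have h : ∃ q' : Ptn, ∀ t : ℕ, q'.part t =
      if t = m + 1 - 1 then q.part m + 1 else q.part t := by
    refine ⟨⟨fun t => if t = m then q.part m + 1 else q.part t, ?_, ?_⟩, fun t => by simp⟩
    · intro i j hij
      have h1 := q.antitone' i j hij
      split_ifs with h2 h3 h3
      · exact le_rfl
      · have h4 := q.antitone' i (m - 1) (by omega)
        omega
      · subst h3
        omega
      · exact h1
    · obtain ⟨N, hN⟩ := q.finite'
      refine ⟨max N (m + 1), fun i hi => ?_⟩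
      rw [if_neg (by omega)]
      exact hN i (by omega)
  unfold addBox
  rw [dif_pos h, h.choose_spec t]
  simp

end Ptn

/-- A sum over nodes, each of which is determined by its component and its row, as a double sum over
components and over the first `N` rows. -/
lemma finsum_nodes {M : Type*} [AddCommGroup M] {l : ℕ} (N : ℕ) (P : Node l → Prop)
    (c : Fin l → ℕ → ℕ) (g : Node l → M)
    (hP : ∀ k i j, P (k, i, j) → ∃ m < N, i = m + 1 ∧ j = c k m) :
    (∑ᶠ x : Node l, if P x then g x else 0) =
      ∑ k : Fin l, ∑ m ∈ Finset.range N,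
        if P (k, m + 1, c k m) then g (k, m + 1, c k m) else 0 := by
  rw [finsum_eq_sum_of_support_subset (s := ((Finset.univ : Finset (Fin l)) ×ˢ
      Finset.range N).image (fun y => ((y.1, y.2 + 1, c y.1 y.2) : Node l)))]
  · rw [Finset.sum_image, Finset.sum_product]
    rintro ⟨a, b⟩ - ⟨a', b'⟩ - h
    simp only [Prod.mk.injEq] at h ⊢
    omega
  · rintro ⟨k, i, j⟩ h
    have hp : P (k, i, j) := by
      by_contra hc
      exact h (if_neg hc)
    obtain ⟨m, hm, rfl, rfl⟩ := hP k i j hp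
    simp only [Finset.coe_image, Set.mem_image]
    exact ⟨(k, m), by simpa using hm, rfl⟩

/-- The conditions for addability and removability can be dropped: the terms this introduces
cancel between rows `m + 1` and `m + 2` whenever those rows are equal. -/
lemma sum_rows {M : Type*} [AddCommGroup M] (q : Ptn) (f : ℕ → ℕ → M) (N : ℕ) :
    (∑ m ∈ Finset.range (N + 1),
        if m = 0 ∨ q.part m < q.part (m - 1) then f (m + 1) (q.part m + 1) else 0)
      - (∑ m ∈ Finset.range N, if q.part (m + 1) < q.part m then f (m + 2) (q.part m + 1) else 0)
    = f (N + 1) (q.part N + 1)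
      + ∑ m ∈ Finset.range N, (f (m + 1) (q.part m + 1) - f (m + 2) (q.part m + 1)) := by
  induction N with
  | zero => simp
  | succ N ih =>
    rw [Finset.sum_range_succ _ (N + 1),
      Finset.sum_range_succ (fun m => ite (q.part (m + 1) < q.part m) _ _) N,
      add_sub_add_comm, ih, Finset.sum_range_succ _ N]
    by_cases h : q.part (N + 1) < q.part N
    · simp only [Nat.add_sub_cancel, h, or_true, if_true]
      abel
    · have he : q.part (N + 1) = q.part N :=
        le_antisymm (q.antitone' _ _ (Nat.le_succ N)) (not_lt.mp h)
      simp only [Nat.add_sub_cancel, he, lt_irrefl, or_false, Nat.succ_ne_zero, if_false]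
      abel

/-- The variable `Y_{c̄(k;i,j), h(k;i,j)}` attached to the triple `(k;i,j)`. -/
noncomputable def nodeMon (n l : ℕ) (p : Fin l → ZMod n) (ξ : ZSlope l) (k : Fin l) (i j : ℕ) :
    Mon n :=
  Finsupp.single (colorOf n l p (k, i, j), ξ.h (k, i, j)) 1

/-- `Ψ` as a product over rows, in which the factor of a row depends only on the length of that
row. Here `N` bounds the number of rows of all components. -/
lemma Psi_eq (n l : ℕ) (p : Fin l → ZMod n) (ξ : ZSlope l) (lam : MP l) (N : ℕ)
    (hN : ∀ k, ∀ i ≥ N, (lam k).part i = 0) :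
    Psi n l p ξ lam = ∑ k, (nodeMon n l p ξ k (N + 1) 1 + ∑ m ∈ Finset.range N,
      (nodeMon n l p ξ k (m + 1) ((lam k).part m + 1)
        - nodeMon n l p ξ k (m + 2) ((lam k).part m + 1))) := by
  unfold Psi
  rw [finsum_nodes (N + 1) (fun x => (lam x.1).Addable x.2.1 x.2.2)
      (fun k m => (lam k).part m + 1),
    finsum_nodes N (fun x => (lam x.1).Removable x.2.1 x.2.2) (fun k m => (lam k).part m),
    ← Finset.sum_sub_distrib]
  · refine Finset.sum_congr rfl fun k _ => ?_
    have hs := sum_rows (lam k) (nodeMon n l p ξ k) N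
    rw [hN k N le_rfl] at hs
    rw [← hs]
    congr 1
    · refine Finset.sum_congr rfl fun m _ => ?_
      refine if_congr ?_ rfl rfl
      simp [Ptn.addable_iff]
    · refine Finset.sum_congr rfl fun m _ => ?_
      refine if_congr ?_ ?_ rfl
      · simp [Ptn.removable_iff]
      · simp only [nodeMon, colorOf, ZSlope.h]
        congr 2
        · push_cast
          ring
        · push_cast
          ring
  · intro k i j h
    obtain ⟨m, rfl, rfl, h⟩ := ((lam k).removable_iff i j).1 h
    refine ⟨m, ?_, rfl, rfl⟩
    by_contra hc
    have := hN k m (by omega)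
    omega
  · intro k i j h
    obtain ⟨m, rfl, rfl, h⟩ := ((lam k).addable_iff i j).1 h
    refine ⟨m, ?_, rfl, rfl⟩
    by_contra hc
    have := hN k (m - 1) (by omega)
    omega

/-- Lemma 8.2: if `mu` is obtained from `lam` by adding an addable box `b` of
color `ib`, then `Ψ(mu) = A_{ib, h(b)}⁻¹ · Ψ(lam)` (written additively). -/
theorem stmt7 (n l : ℕ) (hn : 1 ≤ n) (hl : 1 ≤ l) (p : Fin l → ZMod n) (ξ : ZSlope l)
    (lam : MP l) (b : Node l) (hadd : (lam b.1).Addable b.2.1 b.2.2)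
    (ib : ZMod n) (hcol : colorOf n l p b = ib) :
    Psi n l p ξ (MPadd lam b) = Psi n l p ξ lam - Amon n ξ.xiO ξ.xiObar ib (ξ.h b) := by
  obtain ⟨k₀, i₀, j₀⟩ := b
  obtain ⟨m₀, rfl, rfl, hm⟩ := ((lam k₀).addable_iff i₀ j₀).1 hadd
  subst hcol
  choose N₀ hN₀ using fun k => (lam k).finite'
  obtain ⟨N, hmN, hN⟩ : ∃ N, m₀ < N ∧ ∀ k, ∀ i ≥ N, (lam k).part i = 0 := by
    refine ⟨max (m₀ + 1) (Finset.univ.sup N₀), by omega, fun k i hi => hN₀ k i ?_⟩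
    have := Finset.le_sup (f := N₀) (Finset.mem_univ k)
    omega
  have hpart : ∀ k t, (MPadd lam (k₀, m₀ + 1, (lam k₀).part m₀ + 1) k).part t =
      if k = k₀ ∧ t = m₀ then (lam k₀).part m₀ + 1 else (lam k).part t := by
    intro k t
    by_cases hk : k = k₀
    · subst hk
      simp [MPadd, Ptn.addBox_part _ _ hm]
    · simp [MPadd, hk]
  rw [Psi_eq n l p ξ lam N hN, Psi_eq n l p ξ _ N, sub_eq_add_neg, ← sub_eq_iff_eq_add',
    ← Finset.sum_sub_distrib, Finset.sum_eq_single k₀, add_sub_add_left_eq_sub,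
    ← Finset.sum_sub_distrib, Finset.sum_eq_single m₀]
  · have e1 : nodeMon n l p ξ k₀ (m₀ + 1) ((lam k₀).part m₀ + 1 + 1) =
        Finsupp.single (colorOf n l p (k₀, m₀ + 1, (lam k₀).part m₀ + 1) + 1,
          ξ.h (k₀, m₀ + 1, (lam k₀).part m₀ + 1) + ξ.xiObar) 1 := by
      simp only [nodeMon, colorOf, ZSlope.h]
      congr 2 <;> push_cast <;> ring
    have e2 : nodeMon n l p ξ k₀ (m₀ + 2) ((lam k₀).part m₀ + 1 + 1) =
        Finsupp.single (colorOf n l p (k₀, m₀ + 1, (lam k₀).part m₀ + 1),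
          ξ.h (k₀, m₀ + 1, (lam k₀).part m₀ + 1) + (ξ.xiO + ξ.xiObar)) 1 := by
      simp only [nodeMon, colorOf, ZSlope.h]
      congr 2 <;> push_cast <;> ring
    have e3 : nodeMon n l p ξ k₀ (m₀ + 2) ((lam k₀).part m₀ + 1) =
        Finsupp.single (colorOf n l p (k₀, m₀ + 1, (lam k₀).part m₀ + 1) - 1,
          ξ.h (k₀, m₀ + 1, (lam k₀).part m₀ + 1) + ξ.xiO) 1 := by
      simp only [nodeMon, colorOf, ZSlope.h]
      congr 2 <;> push_cast <;> ring
    rw [hpart, if_pos ⟨rfl, rfl⟩, e1, e2, e3, nodeMon, Amon]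
    abel
  · intro m _ hne
    rw [hpart, if_neg (by tauto), sub_self]
  · intro h
    exact absurd (Finset.mem_range.2 hmN) h
  · intro k _ hne
    simp [hpart, hne]
  · intro h
    exact absurd (Finset.mem_univ k₀) h
  · intro k i hi
    rw [hpart, if_neg (by omega)]
    exact hN k i hi
end

section
/- Fix integers n ≥ 2 and ℓ ≥ 1. For every irrational real number z with 1/(n−1) < z < n−1, there exists a slope datum ξ = (ξ_Ω, ξ_Ω̄, ξ_1, …, ξ_ℓ) which is both general and aligned and satisfies ξ_Ω/ξ_Ω̄ = z. -/
/-!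
Normalise `ξ_Ω̄ = 1` and `ξ_Ω = z`, and take `ξ_k = (k + 1) t` for a single real parameter `t`.
Two nodes in the same component have distinct heights because `z` is irrational. A coincidence of
heights between different components forces `t` into the countable set of numbers `(a z + b) / c`
with `a, b, c` integers. The complement of this set is dense, so it contains some `t` in the
interval `(0, 1 / l)`; the bound `t < 1 / l` makes all differences `ξ_r - ξ_s` smaller than `1`,
which gives alignment.
-/

open scoped Classical

/-- for every irrational `z` with `1/(n−1) < z < n−1` there is a general aligned
slope datum with `ξ_Ω / ξ_Ω̄ = z`. -/
theorem stmt13 (n l : ℕ) (hn : 2 ≤ n) (hl : 1 ≤ l) (z : ℝ) (hz : Irrational z)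
    (hz1 : 1 / ((n : ℝ) - 1) < z) (hz2 : z < (n : ℝ) - 1) :
    ∃ ξ : Slope l, ξ.General ∧ ξ.Aligned ∧ ξ.xiO / ξ.xiObar = z := by
  have hn' : (2 : ℝ) ≤ n := by exact_mod_cast hn
  have hl' : (0 : ℝ) < l := by exact_mod_cast hl
  have hz0 : 0 < z := lt_trans (by apply one_div_pos.mpr; linarith) hz1
  have hS : (Set.range fun p : ℤ × ℤ × ℤ =>
      ((p.1 : ℝ) * z + (p.2.1 : ℝ)) / (p.2.2 : ℝ)).Countable := Set.countable_range _
  obtain ⟨t, htS, ht0, ht1⟩ := (hS.dense_compl ℝ).exists_between (one_div_pos.mpr hl')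
  have htl : t * l < 1 := (lt_div_iff₀ hl').mp ht1
  refine ⟨⟨z, 1, fun k => ((k : ℕ) + 1 : ℝ) * t, hz0, one_pos, fun k => by positivity⟩,
    ?_, ?_, by simp⟩
  · rintro ⟨k, i, j⟩ ⟨k', i', j'⟩ - - - - h
    simp only [Slope.h] at h
    have hk : k = k' := by
      by_contra hne
      have hne' : ((k : ℕ) : ℝ) - ((k' : ℕ) : ℝ) ≠ 0 := by
        rw [sub_ne_zero]
        exact_mod_cast fun e => hne (Fin.ext e)
      apply htS
      refine ⟨((i' : ℤ) - i, (j' : ℤ) - j, ((k : ℕ) : ℤ) - ((k' : ℕ) : ℤ)), ?_⟩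
      push_cast
      rw [div_eq_iff hne']
      linarith
    subst hk
    have hi : i = i' := by
      by_contra hne
      have hne' : (i : ℝ) - (i' : ℝ) ≠ 0 := by
        rw [sub_ne_zero]
        exact_mod_cast hne
      apply hz
      refine ⟨((j' : ℚ) - j) / ((i : ℚ) - i'), ?_⟩
      push_cast
      rw [div_eq_iff hne']
      linarith
    subst hi
    have hj : (j : ℝ) = j' := by linarith
    have hj' : j = j' := by exact_mod_cast hj
    rw [hj']
  · intro a b
    have ha : ((a : ℕ) : ℝ) ≤ l := by exact_mod_cast a.2.le
    have hb : ((b : ℕ) : ℝ) ≤ l := by exact_mod_cast b.2.le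
    have ha0 : (0 : ℝ) ≤ ((a : ℕ) : ℝ) := Nat.cast_nonneg _
    have hb0 : (0 : ℝ) ≤ ((b : ℕ) : ℝ) := Nat.cast_nonneg _
    change |((a : ℕ) + 1 : ℝ) * t - ((b : ℕ) + 1 : ℝ) * t| < z + 1
    rw [abs_lt]
    constructor <;> nlinarith
end
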